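/- arXiv:2210.00235 — 2 statements merged into one kernel-verified Lean document; each statement's English description precedes it below -/
import Mathlib

section
/- Let n ≥ 1 and let A be a direction-determinate two-way deterministic finite automaton with n states that accepts at least one string. Then the length of the shortest string accepted by A is at most C(n, ⌊n/2⌋) − 1, where C denotes the binomial coefficient. -/
/-- Tape symbols of a 2DFA: the left end-marker `⊢`, the right end-marker `⊣`,
and the letters of the input alphabet `α`. -/
inductive TapeSymbol (α : Type) where
  | lend
  | rend
  | letter (a : α)

/-- A two-way deterministic finite automaton with input alphabet `α` and state set `σ`:
an initial state, a partial transition function (`none` = undefined; the Boolean direction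
`true` means "move right" (+1), `false` means "move left" (−1)), and a set of accepting
states. -/
structure TwoDFA (α : Type) (σ : Type) where
  init : σ
  δ : σ → TapeSymbol α → Option (σ × Bool)
  F : Set σ

/-- The symbol written on the tape `⊢ a₁ … a_m ⊣` at position `i ∈ {0, …, m+1}`
(for an input string `w = a₁ … a_m`); `none` if the position is off the tape. -/
def tapeSym {α : Type} (w : List α) (i : ℤ) : Option (TapeSymbol α) :=
  if i = 0 then some TapeSymbol.lend
  else if i = (w.length : ℤ) + 1 then some TapeSymbol.rend
  else if 0 < i then (w[(i - 1).toNat]?).map TapeSymbol.letter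
  else none

/-- One step of the 2DFA `A` on input `w`: from configuration `c = (state, position)`
to configuration `c'`. -/
def TwoDFA.Step {α σ : Type} (A : TwoDFA α σ) (w : List α) (c c' : σ × ℤ) : Prop :=
  ∃ s, tapeSym w c.2 = some s ∧
    ∃ r d, A.δ c.1 s = some (r, d) ∧ c' = (r, c.2 + if d then 1 else -1)

/-- The automaton `A` accepts `w` if, starting on the left end-marker (position 0)
in the initial state, its computation eventually reaches the right end-marker
(position `|w| + 1`) in an accepting state. -/
def TwoDFA.Accepts {α σ : Type} (A : TwoDFA α σ) (w : List α) : Prop :=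
  ∃ q ∈ A.F, Relation.ReflTransGen (A.Step w) (A.init, 0) (q, (w.length : ℤ) + 1)

/-- A 2DFA is direction-determinate if its state set splits as `Q = Q⁺ ∪ Q⁻`
(here given by the indicator `f : σ → Bool`, with `Q⁺ = f⁻¹(true)` and `Q⁻ = f⁻¹(false)`)
so that every transition moving right enters a state of `Q⁺` and every transition
moving left enters a state of `Q⁻`. -/
def TwoDFA.DirectionDeterminate {α σ : Type} (A : TwoDFA α σ) : Prop :=
  ∃ f : σ → Bool, ∀ q s r d, A.δ q s = some (r, d) → f r = d

/-!
If `w` is accepted, its accepting run may be taken free of repeated configurations. For each cut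
`i` of the tape, between positions `i` and `i + 1`, let `K i` be the set of states in which the run
lands just after crossing the cut. Direction-determinacy says that the state alone tells in which
direction the cut was crossed, so `K i` consists of `k + 1` states of `Q⁺` and `k` states of `Q⁻`
for some `k`, and therefore `K i ∆ Q⁻` has exactly `|Q⁻| + 1` elements. If `w` is long, two cuts
`i < j` have the same set `K i = K j`, and the letters between them can be excised. The excision
turns the run into a path together with some disjoint cycles; since the path still leads from the
initial to the accepting configuration, the shorter string is accepted.
-/

open Relation Finset
open scoped symmDiff

section PathCycleSystem

variable {C : Type*} [DecidableEq C] {R : C → C → Prop} {s e s' : C} {V : Finset C} {g : C → C}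

/-- The function `g` links the elements of the finite set `V` by `R`-steps into a path from `s` to
`e` together with disjoint cycles: every element other than `e` has a successor other than `s`, and
no two elements share a successor. Unlike paths, such systems survive the excision of a piece of
the tape. -/
structure IsPathCycleSystem (R : C → C → Prop) (s e : C) (V : Finset C) (g : C → C) : Prop where
  source_mem : s ∈ V
  target_mem : e ∈ V
  rel : ∀ c ∈ V.erase e, R c (g c)
  mapsTo : ∀ c ∈ V.erase e, g c ∈ V.erase s
  injOn : Set.InjOn g (V.erase e)

namespace IsPathCycleSystem

theorem singleton (R : C → C → Prop) (e : C) (g : C → C) : IsPathCycleSystem R e e {e} g where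
  source_mem := mem_singleton_self e
  target_mem := mem_singleton_self e
  rel := by simp
  mapsTo := by simp
  injOn := by simp

theorem cons (h : IsPathCycleSystem R s' e V g) (hs : s ∉ V) (hR : R s s') :
    IsPathCycleSystem R s e (insert s V) (Function.update g s s') := by
  have hse : s ≠ e := fun hse => hs (hse ▸ h.target_mem)
  have hne : ∀ c ∈ V.erase e, c ≠ s := fun c hc hcs => hs (hcs ▸ mem_of_mem_erase hc)
  have hg : ∀ c ∈ V.erase e, Function.update g s s' c = g c := fun c hc =>
    Function.update_of_ne (hne c hc) _ _
  refine ⟨mem_insert_self s V, mem_insert_of_mem h.target_mem, ?_, ?_, ?_⟩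
  · simp only [erase_insert_of_ne hse, forall_mem_insert, Function.update_self]
    exact ⟨hR, fun c hc => hg c hc ▸ h.rel c hc⟩
  · simp only [erase_insert_of_ne hse, forall_mem_insert, Function.update_self,
      erase_insert hs]
    exact ⟨h.source_mem, fun c hc => hg c hc ▸ mem_of_mem_erase (h.mapsTo c hc)⟩
  · have hsV : s ∉ (V.erase e : Set C) := fun hsV => hne s hsV rfl
    rw [erase_insert_of_ne hse, coe_insert, Set.injOn_insert hsV]
    refine ⟨h.injOn.congr fun c hc => (hg c hc).symm, ?_⟩
    rintro ⟨c, hc, hcs⟩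
    rw [hg c hc, Function.update_self] at hcs
    exact ne_of_mem_erase (h.mapsTo c hc) hcs

theorem erase_source (h : IsPathCycleSystem R s e V g) (hse : s ≠ e) :
    IsPathCycleSystem R (g s) e (V.erase s) g := by
  have hs : s ∈ V.erase e := mem_erase.2 ⟨hse, h.source_mem⟩
  have hsub : (V.erase s).erase e ⊆ V.erase e := erase_subset_erase e (erase_subset s V)
  refine ⟨h.mapsTo s hs, mem_erase.2 ⟨hse.symm, h.target_mem⟩, fun c hc => h.rel c (hsub hc),
    fun c hc => mem_erase.2 ⟨fun hcs => ?_, h.mapsTo c (hsub hc)⟩, h.injOn.mono (coe_subset.2 hsub)⟩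
  exact ne_of_mem_erase (mem_of_mem_erase hc) (h.injOn (hsub hc) hs hcs)

theorem reflTransGen (h : IsPathCycleSystem R s e V g) : ReflTransGen R s e := by
  induction V using Finset.strongInduction generalizing s with
  | H V ih =>
    by_cases hse : s = e
    · exact hse ▸ .refl
    · exact .head (h.rel s (mem_erase.2 ⟨hse, h.source_mem⟩))
        (ih _ (erase_ssubset h.source_mem) (h.erase_source hse))

theorem image_erase (h : IsPathCycleSystem R s e V g) : (V.erase e).image g = V.erase s := by
  refine eq_of_subset_of_card_le (image_subset_iff.2 h.mapsTo) ?_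
  rw [card_image_of_injOn h.injOn, card_erase_of_mem h.source_mem,
    card_erase_of_mem h.target_mem]

theorem sum_erase_sub {M : Type*} [AddCommGroup M] (h : IsPathCycleSystem R s e V g)
    {φ ψ : C → M} (hψ : ∀ c ∈ V.erase e, ψ (g c) = φ c) :
    ∑ c ∈ V.erase s, (ψ c - φ c) = φ s - φ e := by
  have hsum : ∑ c ∈ V.erase s, ψ c = ∑ c ∈ V.erase e, φ c := by
    rw [← h.image_erase, sum_image h.injOn, sum_congr rfl hψ]
  rw [sum_sub_distrib, hsum, sum_erase_eq_sub h.target_mem, sum_erase_eq_sub h.source_mem]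
  abel

end IsPathCycleSystem

theorem exists_isPathCycleSystem (h : ReflTransGen R s e) :
    ∃ V g, IsPathCycleSystem R s e V g := by
  -- Every element of `U` is allowed as a source, in case a new source already lies in `U`.
  suffices ∃ U : Finset C, s ∈ U ∧ ∀ x ∈ U, ∃ V ⊆ U, ∃ g, IsPathCycleSystem R x e V g by
    obtain ⟨U, hs, hU⟩ := this
    obtain ⟨V, -, hV⟩ := hU s hs
    exact ⟨V, hV⟩
  induction h using ReflTransGen.head_induction_on with
  | refl =>
    refine ⟨{e}, mem_singleton_self e, fun x hx => ?_⟩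
    rw [mem_singleton.1 hx]
    exact ⟨{e}, Subset.rfl, id, .singleton R e id⟩
  | @head s s' hR _ ih =>
    obtain ⟨U, hs', hU⟩ := ih
    by_cases hs : s ∈ U
    · exact ⟨U, hs, hU⟩
    refine ⟨insert s U, mem_insert_self s U, (forall_mem_insert _ _ _).2 ⟨?_, fun x hx => ?_⟩⟩
    · obtain ⟨V, hVU, g, hV⟩ := hU s' hs'
      exact ⟨insert s V, insert_subset_insert s hVU, _, hV.cons (fun h => hs (hVU h)) hR⟩
    · obtain ⟨V, hVU, hV⟩ := hU x hx
      exact ⟨V, hVU.trans (subset_insert s U), hV⟩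

end PathCycleSystem

theorem card_symmDiff_eq_add_sum {ι : Type*} [DecidableEq ι] (K N : Finset ι) :
    (#(K ∆ N) : ℤ) = #N + ∑ a ∈ K, if a ∈ N then -1 else 1 := by
  have hsymm : #(K ∆ N) = #(K \ N) + #(N \ K) := card_union_of_disjoint disjoint_sdiff_sdiff
  have hN : #(N \ K) + #(K ∩ N) = #N := inter_comm N K ▸ card_sdiff_add_card_inter N K
  have hsum : (∑ a ∈ K, if a ∈ N then (-1 : ℤ) else 1) = #(K \ N) - #(K ∩ N) := by
    rw [sum_ite, filter_mem_eq_inter, filter_notMem_eq_sdiff]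
    simp only [sum_const, smul_neg, nsmul_eq_mul, mul_one]
    ring
  omega

section Crossing

variable {σ : Type*} {f : σ → Bool} {R : σ × ℤ → σ × ℤ → Prop} {s e : σ × ℤ}
  {V : Finset (σ × ℤ)} {g : σ × ℤ → σ × ℤ} {i : ℤ}

/-- The displacement of the head in a move entering the state `r`, where `f` is the indicator of
`Q⁺`. -/
def displacement (f : σ → Bool) (r : σ) : ℤ := if f r then 1 else -1

/-- The set `Q⁻`, when `f` is the indicator of `Q⁺`. -/
def leftStates [Fintype σ] (f : σ → Bool) : Finset σ := {r | f r = false}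

/-- A step relation on configurations (state, position) is directed by `f` if the state entered
determines, through `f`, the direction of the move. -/
def DirectedBy (f : σ → Bool) (R : σ × ℤ → σ × ℤ → Prop) : Prop :=
  ∀ c c', R c c' → c'.2 = c.2 + displacement f c'.1

/-- The configuration in state `r` just after crossing the cut between positions `i` and `i + 1`;
the cut is crossed from left to right if `r` is in `Q⁺` and from right to left otherwise. -/
def landing (f : σ → Bool) (i : ℤ) (r : σ) : σ × ℤ := (r, if f r then i + 1 else i)

/-- The states in which a run entering exactly the configurations in `E` lands when crossing the
cut between `i` and `i + 1`. -/
def crossingSet [Fintype σ] [DecidableEq σ] (f : σ → Bool) (E : Finset (σ × ℤ)) (i : ℤ) :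
    Finset σ :=
  {r | landing f i r ∈ E}

theorem mem_crossingSet [Fintype σ] [DecidableEq σ] {E : Finset (σ × ℤ)} {r : σ} :
    r ∈ crossingSet f E i ↔ landing f i r ∈ E := by
  simp [crossingSet]

theorem landing_injective (f : σ → Bool) (i : ℤ) : Function.Injective (landing f i) :=
  fun _ _ h => congrArg Prod.fst h

theorem IsPathCycleSystem.sum_displacement_crossingSet [Fintype σ] [DecidableEq σ]
    (h : IsPathCycleSystem R s e V g) (hR : DirectedBy f R) (hs : s.2 ≤ i) (he : i < e.2) :
    ∑ r ∈ crossingSet f (V.erase s) i, displacement f r = 1 := by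
  let φ (c : σ × ℤ) : ℤ := if c.2 ≤ i then 1 else 0
  let ψ (c : σ × ℤ) : ℤ := if c.2 - displacement f c.1 ≤ i then 1 else 0
  have hψ : ∀ c ∈ V.erase e, ψ (g c) = φ c := fun c hc => by
    simp only [ψ, φ, hR c (g c) (h.rel c hc), add_sub_cancel_right]
  have hlanding (r : σ) : displacement f r = ψ (landing f i r) - φ (landing f i r) := by
    cases hr : f r <;> simp [ψ, φ, landing, displacement, hr]
  have hother (c : σ × ℤ) (hc : c ≠ landing f i c.1) : ψ c - φ c = 0 := by
    have hpos : c.2 ≠ (landing f i c.1).2 := fun h => hc (Prod.ext rfl h)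
    simp only [ψ, φ, landing, displacement] at hpos ⊢
    grind
  calc ∑ r ∈ crossingSet f (V.erase s) i, displacement f r
      = ∑ c ∈ V.erase s, (ψ c - φ c) :=
        sum_of_injOn (landing f i) (landing_injective f i).injOn
          (fun r hr => mem_crossingSet.1 hr)
          (fun c hc hc' => hother c fun hcl =>
            hc' ⟨c.1, mem_crossingSet.2 (hcl ▸ hc), hcl.symm⟩)
          (fun r _ => hlanding r)
    _ = φ s - φ e := h.sum_erase_sub hψ
    _ = 1 := by simp [φ, hs, he]

theorem IsPathCycleSystem.card_crossingSet_symmDiff [Fintype σ] [DecidableEq σ]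
    (h : IsPathCycleSystem R s e V g) (hR : DirectedBy f R) (hs : s.2 ≤ i) (he : i < e.2) :
    #(crossingSet f (V.erase s) i ∆ leftStates f) = #(leftStates f) + 1 := by
  have hsum := h.sum_displacement_crossingSet hR hs he
  have hcard := card_symmDiff_eq_add_sum (crossingSet f (V.erase s) i) (leftStates f)
  have hdisp (r : σ) : (if r ∈ leftStates f then (-1 : ℤ) else 1) =
      displacement f r := by
    cases hr : f r <;> simp [displacement, leftStates, hr]
  simp only [hdisp, hsum] at hcard
  exact_mod_cast hcard

theorem IsPathCycleSystem.exists_crossingSet_eq [Fintype σ] [DecidableEq σ]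
    (h : IsPathCycleSystem R s e V g) (hR : DirectedBy f R)
    (hlong : ((Fintype.card σ).choose (#(leftStates f) + 1) : ℤ) < e.2 - s.2) :
    ∃ i j, s.2 ≤ i ∧ i < j ∧ j < e.2 ∧
      crossingSet f (V.erase s) i = crossingSet f (V.erase s) j := by
  let X (i : ℤ) : Finset σ := crossingSet f (V.erase s) i ∆ leftStates f
  have hmaps : ∀ i ∈ Ico s.2 e.2, X i ∈ powersetCard (#(leftStates f) + 1) univ :=
    fun i hi => mem_powersetCard_univ.2
      (h.card_crossingSet_symmDiff hR (mem_Ico.1 hi).1 (mem_Ico.1 hi).2)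
  have hcard : #(powersetCard (#(leftStates f) + 1) (univ : Finset σ)) < #(Ico s.2 e.2) := by
    rw [card_powersetCard, card_univ, Int.card_Ico]
    omega
  obtain ⟨i, hi, j, hj, hne, hX⟩ := exists_ne_map_eq_of_card_lt_of_maps_to hcard hmaps
  have heq := symmDiff_left_injective _ hX
  rw [mem_Ico] at hi hj
  rcases hne.lt_or_gt with hij | hji
  · exact ⟨i, j, hi.1, hij, hj.2, heq⟩
  · exact ⟨j, i, hj.1, hji, hi.2, heq.symm⟩

end Crossing

section Excision

variable {σ : Type*} {f : σ → Bool} {R R' : σ × ℤ → σ × ℤ → Prop} {s e : σ × ℤ}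
  {V : Finset (σ × ℤ)} {g : σ × ℤ → σ × ℤ} {i j : ℤ}

/-- The position on the original tape of the square which comes to stand at position `p` once the
positions `i + 1, …, j` are excised. -/
def unexcise (i j p : ℤ) : ℤ := if p ≤ i then p else p + (j - i)

theorem unexcise_of_le {p : ℤ} (hp : p ≤ i) : unexcise i j p = p := if_pos hp

theorem unexcise_of_lt {p : ℤ} (hp : i < p) : unexcise i j p = p + (j - i) := if_neg hp.not_ge

theorem unexcise_injective (hij : i ≤ j) : Function.Injective (unexcise i j) := fun p q h => by
  unfold unexcise at h
  grind

theorem mem_unexcise_add_displacement {E : Set (σ × ℤ)}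
    (hE : ∀ r, landing f i r ∈ E ↔ landing f j r ∈ E) {r : σ} {p : ℤ}
    (h : (r, unexcise i j p + displacement f r) ∈ E) :
    (r, unexcise i j (p + displacement f r)) ∈ E := by
  have hmove : unexcise i j (p + displacement f r) = unexcise i j p + displacement f r ∨
      ((r, unexcise i j p + displacement f r) = landing f i r ∧
        (r, unexcise i j (p + displacement f r)) = landing f j r) ∨
      ((r, unexcise i j p + displacement f r) = landing f j r ∧
        (r, unexcise i j (p + displacement f r)) = landing f i r) := by
    unfold unexcise displacement landing
    grind
  rcases hmove with hfar | ⟨hi, hj⟩ | ⟨hj, hi⟩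
  · rwa [hfar]
  · rw [hj, ← hE r, ← hi]
    exact h
  · rw [hi, hE r, ← hj]
    exact h

/-- The configuration of the original tape corresponding to a configuration of the tape from which
the positions `i + 1, …, j` are excised. -/
def unexciseConfig (i j : ℤ) (c : σ × ℤ) : σ × ℤ := (c.1, unexcise i j c.2)

theorem unexciseConfig_injective (hij : i ≤ j) :
    Function.Injective (unexciseConfig (σ := σ) i j) :=
  Function.injective_id.prodMap (unexcise_injective hij)

/-- The successor function on configurations of the excised tape: the state entered is the one
prescribed by `g` on the original tape, and it determines the move of the head. -/
def exciseMap (f : σ → Bool) (i j : ℤ) (g : σ × ℤ → σ × ℤ) (c : σ × ℤ) : σ × ℤ :=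
  let r := (g (unexciseConfig i j c)).1
  (r, c.2 + displacement f r)

theorem IsPathCycleSystem.excise [DecidableEq σ] (hij : i ≤ j) (hR : DirectedBy f R)
    (h : IsPathCycleSystem R (unexciseConfig i j s) (unexciseConfig i j e) V g)
    (hcut : ∀ r, landing f i r ∈ V.erase (unexciseConfig i j s) ↔
      landing f j r ∈ V.erase (unexciseConfig i j s))
    (hR' : ∀ q p r z, R (q, unexcise i j p) (r, unexcise i j p + z) → R' (q, p) (r, p + z)) :
    IsPathCycleSystem R' s e
      (V.preimage (unexciseConfig i j) (unexciseConfig_injective hij).injOn)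
      (exciseMap f i j g) := by
  have hinj := unexciseConfig_injective (σ := σ) hij
  set V' := V.preimage (unexciseConfig i j) hinj.injOn
  have hmem (c x : σ × ℤ) :
      c ∈ V'.erase x ↔ unexciseConfig i j c ∈ V.erase (unexciseConfig i j x) := by
    simp [V', hinj.eq_iff]
  have hg : ∀ c ∈ V'.erase e, g (unexciseConfig i j c) =
      ((exciseMap f i j g c).1, unexcise i j c.2 + displacement f (exciseMap f i j g c).1) :=
    fun c hc => Prod.ext rfl (hR _ _ (h.rel _ ((hmem c e).1 hc)))
  refine ⟨mem_preimage.2 h.source_mem, mem_preimage.2 h.target_mem, fun c hc => ?_,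
    fun c hc => ?_, fun c hc c' hc' hcc' => ?_⟩
  · exact hR' _ _ _ _ (hg c hc ▸ h.rel _ ((hmem c e).1 hc))
  · exact (hmem _ s).2 (mem_unexcise_add_displacement hcut
      (hg c hc ▸ h.mapsTo _ ((hmem c e).1 hc)))
  · have hpos : c.2 = c'.2 := by
      have hsnd : c.2 + displacement f (exciseMap f i j g c).1 =
          c'.2 + displacement f (exciseMap f i j g c').1 := congrArg Prod.snd hcc'
      rwa [hcc', add_left_inj] at hsnd
    refine hinj (h.injOn ((hmem c e).1 hc) ((hmem c' e).1 hc') ?_)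
    rw [hg c hc, hg c' hc', hcc', hpos]

end Excision

section Automaton

variable {α σ : Type} {A : TwoDFA α σ} {f : σ → Bool} {w w' : List α}

theorem tapeSym_take_append_drop (w : List α) {i j : ℕ} (hij : i ≤ j) (hj : j ≤ w.length) (p : ℤ) :
    tapeSym (w.take i ++ w.drop j) p = tapeSym w (unexcise i j p) := by
  have hlen : (w.take i ++ w.drop j).length = i + (w.length - j) := by
    rw [List.length_append, List.length_take_of_le (hij.trans hj), List.length_drop]
  rcases le_or_gt p i with hp | hp
  · rw [unexcise_of_le hp]
    unfold tapeSym
    rw [hlen]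
    split_ifs <;> try omega
    · rfl
    · rw [List.getElem?_append_left (by rw [List.length_take]; omega),
        List.getElem?_take_of_lt (by omega)]
    · rfl
  · have hindex : j + ((p - 1).toNat - (w.take i).length) = (p + (j - i) - 1).toNat := by
      rw [List.length_take_of_le (hij.trans hj)]
      omega
    rw [unexcise_of_lt hp]
    unfold tapeSym
    rw [hlen]
    split_ifs <;> try omega
    · rfl
    · rw [List.getElem?_append_right (by rw [List.length_take]; omega), List.getElem?_drop, hindex]

namespace TwoDFA

theorem step_of_tapeSym_eq {p p' z : ℤ} {q r : σ} (hp : tapeSym w p = tapeSym w' p')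
    (h : A.Step w (q, p) (r, p + z)) : A.Step w' (q, p') (r, p' + z) := by
  obtain ⟨a, ha, r', d, hd, hr⟩ := h
  obtain ⟨rfl, hz⟩ := Prod.mk.inj hr
  exact ⟨a, hp ▸ ha, r, d, hd, by rw [add_left_cancel hz]⟩

theorem step_directedBy (hf : ∀ q a r d, A.δ q a = some (r, d) → f r = d) :
    DirectedBy f (A.Step w) := by
  rintro c _ ⟨a, -, r, d, hd, rfl⟩
  rw [displacement, hf _ _ _ _ hd]

theorem accepts_take_append_drop [DecidableEq σ] {q : σ} {V : Finset (σ × ℤ)}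
    {g : σ × ℤ → σ × ℤ} {i j : ℕ} (hf : ∀ q a r d, A.δ q a = some (r, d) → f r = d) (hq : q ∈ A.F)
    (hV : IsPathCycleSystem (A.Step w) (A.init, 0) (q, (w.length : ℤ) + 1) V g) (hij : i ≤ j)
    (hj : j ≤ w.length)
    (hcut : ∀ r, landing f i r ∈ V.erase (A.init, 0) ↔ landing f j r ∈ V.erase (A.init, 0)) :
    A.Accepts (w.take i ++ w.drop j) := by
  have hlen : (w.take i ++ w.drop j).length = i + (w.length - j) := by
    rw [List.length_append, List.length_take_of_le (hij.trans hj), List.length_drop]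
  have hinit : unexciseConfig (i : ℤ) j (A.init, 0) = (A.init, 0) :=
    congrArg (A.init, ·) (unexcise_of_le (by omega))
  have hend : unexciseConfig (i : ℤ) j (q, ((w.take i ++ w.drop j).length : ℤ) + 1) =
      (q, (w.length : ℤ) + 1) :=
    congrArg (q, ·) ((unexcise_of_lt (by omega)).trans (by omega))
  rw [← hinit] at hV hcut
  rw [← hend] at hV
  exact ⟨q, hq, (hV.excise (by omega) (step_directedBy hf) hcut fun _ p _ _ =>
    step_of_tapeSym_eq (tapeSym_take_append_drop w hij hj p).symm).reflTransGen⟩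

theorem exists_accepts_length_lt [Fintype σ]
    (hf : ∀ q a r d, A.δ q a = some (r, d) → f r = d) (hw : A.Accepts w)
    (hlong : (Fintype.card σ).choose (#(leftStates f) + 1) ≤ w.length) :
    ∃ w', A.Accepts w' ∧ w'.length < w.length := by
  classical
  obtain ⟨q, hq, hrun⟩ := hw
  obtain ⟨V, g, hV⟩ := exists_isPathCycleSystem hrun
  obtain ⟨i, j, hi, hij, hj, hK⟩ := hV.exists_crossingSet_eq (step_directedBy hf) (by dsimp; omega)
  lift i to ℕ using hi
  lift j to ℕ using by omega
  have hij' : i < j := Nat.cast_lt.1 hij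
  have hjw : j ≤ w.length := Nat.cast_le.1 (Int.le_of_lt_add_one hj)
  refine ⟨w.take i ++ w.drop j, accepts_take_append_drop hf hq hV hij'.le hjw fun r => ?_, ?_⟩
  · simpa only [mem_crossingSet] using Finset.ext_iff.1 hK r
  · simp only [List.length_append, List.length_take, List.length_drop]
    omega

end TwoDFA

end Automaton

theorem shortest_accepted_le_of_direction_determinate_2dfa_general {α σ : Type} [Fintype σ]
    (A : TwoDFA α σ) (f : σ → Bool) (hf : ∀ q a r d, A.δ q a = some (r, d) → f r = d)
    (hne : ∃ w, A.Accepts w) :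
    ∃ w, A.Accepts w ∧ w.length < (Fintype.card σ).choose (#(leftStates f) + 1) := by
  obtain ⟨w, hw, hmin⟩ := exists_minimalFor_of_wellFoundedLT A.Accepts List.length hne
  refine ⟨w, hw, lt_of_not_ge fun hlong => ?_⟩
  obtain ⟨w', hw', hlt⟩ := TwoDFA.exists_accepts_length_lt hf hw hlong
  exact (hmin hw' hlt.le).not_gt hlt

/-- Let `n ≥ 1` and let `A` be a direction-determinate 2DFA with `n` states that accepts
at least one string. Then the length of the shortest string accepted by `A` is at most
`C(n, ⌊n/2⌋) − 1`. -/
theorem shortest_accepted_le_of_direction_determinate_2dfa (n : ℕ) (hn : 1 ≤ n)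
    (α σ : Type) [Fintype α] [Fintype σ] (hcard : Fintype.card σ = n)
    (A : TwoDFA α σ) (hdd : A.DirectionDeterminate) (hne : ∃ w, A.Accepts w) :
    ∃ w, A.Accepts w ∧ w.length ≤ Nat.choose n (n / 2) - 1 := by
  obtain ⟨f, hf⟩ := hdd
  obtain ⟨w, hw, hlt⟩ := shortest_accepted_le_of_direction_determinate_2dfa_general A f hf hne
  exact ⟨w, hw, Nat.le_sub_one_of_lt (hlt.trans_le (hcard ▸ Nat.choose_le_middle _ _))⟩
end

section
/- For each n ≥ 2, there exists a two-way deterministic finite automaton with n states which accepts at least one string, and such that the length of the shortest string it accepts is exactly 3·2^{n−2} − 1. -/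
/-!
The automaton is a recursive counter. A prefix of the tape is summarised by the relation between
the state in which the head enters its last symbol and the state in which it then leaves the prefix
to the right. The head starts in the largest state and must arrive at `0`. To get from `q + 1` to
`q`, the input must first prepare the prefix so that it turns `q` into `0`, which amounts to
counting down from `q` inside the prefix; the trade then erases this preparation, and `q` has to
be counted down a second time. The cost therefore satisfies `c (q + 1) = 2 * c q + 1`, with
`c 1 = 2`. That the cost cannot be avoided is seen backwards: whatever remains to be done after a
letter, at most one more letter was needed before it.
-/

namespace TwoDFA

/-- The crossing relation of a tape prefix `ux`, where `d` gives the moves on its last symbol `x`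
and `f` is the crossing relation of `u`: `ExitsRight d f q r` says that the head, started on `x`
in state `q`, eventually leaves `ux` to the right, and does so in state `r`. -/
inductive ExitsRight {σ : Type*} (d : σ → Option (σ × Bool)) (f : σ → σ → Prop) : σ → σ → Prop
  | right {q r : σ} : d q = some (r, true) → ExitsRight d f q r
  | left {q p p' r : σ} :
      d q = some (p, false) → f p p' → ExitsRight d f p' r → ExitsRight d f q r

/-- A crossing relation is settled if every state in which the head can leave the prefix to the
right is either sent back out unchanged by the prefix or never leaves it again. -/
def Settled {σ : Type*} (f : σ → σ → Prop) : Prop :=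
  ∀ ⦃x z y⦄, f x z → f z y → y = z

theorem ExitsRight.exists_right {σ : Type*} {d : σ → Option (σ × Bool)} {f : σ → σ → Prop}
    {q r : σ} (h : ExitsRight d f q r) : ∃ p, d p = some (r, true) := by
  induction h with
  | right h => exact ⟨_, h⟩
  | left _ _ _ ih => exact ih

theorem settled_exitsRight {σ : Type*} {d : σ → Option (σ × Bool)} {f : σ → σ → Prop}
    (hd : ∀ q r, d q = some (r, true) → d r = some (r, true) ∨ d r = none) :
    Settled (ExitsRight d f) := by
  intro x z y hxz hzy
  obtain ⟨p, hp⟩ := hxz.exists_right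
  rcases hd p z hp with h | h <;> cases hzy <;> simp_all

section Crossing

variable {α σ : Type} {A : TwoDFA α σ} {w : List α}

/-- The crossing relation of the tape prefix `u`. -/
def crossing (A : TwoDFA α σ) (u : List (TapeSymbol α)) : σ → σ → Prop :=
  u.foldl (fun f x => ExitsRight (A.δ · x) f) (fun _ _ => False)

/-- Acceptance of the rest `v` of a tape by first arrivals only: the head enters `v` from the left
in the given state, and `f` is the crossing relation of the part of the tape before `v`. -/
def AcceptsFrom (A : TwoDFA α σ) : (σ → σ → Prop) → σ → List (TapeSymbol α) → Prop
  | _, q, [] => q ∈ A.F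
  | f, q, x :: v =>
    ∃ r, ExitsRight (A.δ · x) f q r ∧ A.AcceptsFrom (ExitsRight (A.δ · x) f) r v

/-- The tape `⊢ w` without its right end-marker. -/
def leftTape (w : List α) : List (TapeSymbol α) :=
  .lend :: w.map .letter

theorem crossing_concat (A : TwoDFA α σ) (u : List (TapeSymbol α)) (x : TapeSymbol α) :
    A.crossing (u ++ [x]) = ExitsRight (A.δ · x) (A.crossing u) :=
  List.foldl_concat ..

theorem length_leftTape (w : List α) : (leftTape w).length = w.length + 1 := by
  simp [leftTape]

theorem tapeSym_length {u v : List (TapeSymbol α)} {x : TapeSymbol α}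
    (h : leftTape w = u ++ x :: v) : tapeSym w u.length = some x := by
  rcases u with - | ⟨y, u⟩
  · simp_all [leftTape, tapeSym]
  · have hw : w.map .letter = u ++ x :: v := (List.cons.inj h).2
    have hlen : u.length < w.length := by
      have := congrArg List.length hw
      simp only [List.length_map, List.length_append, List.length_cons] at this
      omega
    have hx : w[u.length]?.map .letter = some x := by
      rw [← List.getElem?_map, hw]
      simp
    have hne : (u.length : ℤ) + 1 ≠ 0 := by omega
    have hpos : (0 : ℤ) < u.length + 1 := by omega
    simp [tapeSym, hlen.ne, hne, hpos, hx]

theorem exists_leftTape_eq_of_tapeSym {i : ℤ} {x : TapeSymbol α} (h : tapeSym w i = some x)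
    (hx : x ≠ .rend) : ∃ u v, leftTape w = u ++ x :: v ∧ i = u.length := by
  unfold tapeSym at h
  split_ifs at h with h0 h1 h2
  · exact ⟨[], w.map .letter, by simp_all [leftTape]⟩
  · simp_all
  · obtain ⟨a, ha, rfl⟩ := Option.map_eq_some_iff.1 h
    obtain ⟨hlt, rfl⟩ := List.getElem?_eq_some_iff.1 ha
    refine ⟨leftTape (w.take (i - 1).toNat), (w.drop ((i - 1).toNat + 1)).map .letter, ?_, ?_⟩
    · rw [leftTape, leftTape, List.cons_append, ← List.map_cons, ← List.map_append,
        ← List.drop_eq_getElem_cons, List.take_append_drop]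
    · rw [length_leftTape, List.length_take]
      omega

theorem reflTransGen_of_exitsRight {u v : List (TapeSymbol α)} {x : TapeSymbol α} {q r : σ}
    (hw : leftTape w = u ++ x :: v) (h : ExitsRight (A.δ · x) (A.crossing u) q r) :
    Relation.ReflTransGen (A.Step w) (q, (u.length : ℤ)) (r, (u.length : ℤ) + 1) := by
  induction u using List.reverseRecOn generalizing x v q r with
  | nil =>
    cases h with
    | right h => exact .single ⟨x, tapeSym_length hw, _, _, h, by simp⟩
    | left _ h _ => exact h.elim
  | append_singleton u y ih =>
    induction h with
    | right h => exact .single ⟨x, tapeSym_length hw, _, _, h, by simp⟩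
    | left h hcross _ ihx =>
      rw [crossing_concat] at hcross
      have hback := ih (by simpa using hw) hcross
      refine .head ⟨x, tapeSym_length hw, _, _, h, rfl⟩ ?_
      simp only [List.length_append, List.length_singleton, Nat.cast_add, Nat.cast_one] at ihx ⊢
      simpa using hback.trans ihx

theorem exists_reflTransGen_of_acceptsFrom {u v : List (TapeSymbol α)} {q : σ}
    (hw : leftTape w = u ++ v) (h : A.AcceptsFrom (A.crossing u) q v) :
    ∃ t ∈ A.F,
      Relation.ReflTransGen (A.Step w) (q, (u.length : ℤ)) (t, (w.length : ℤ) + 1) := by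
  induction v generalizing u q with
  | nil =>
    have hlen := length_leftTape w
    rw [hw, List.append_nil] at hlen
    exact ⟨q, h, by rw [hlen]; exact .refl⟩
  | cons x v ih =>
    obtain ⟨r, hr, hv⟩ := h
    rw [← crossing_concat] at hv
    obtain ⟨t, ht, hrun⟩ := ih (by simpa using hw) hv
    refine ⟨t, ht, (reflTransGen_of_exitsRight hw hr).trans ?_⟩
    simpa using hrun

theorem acceptsFrom_of_step (hrend : ∀ q, A.δ q .rend = none) {q r : σ} {i j : ℤ}
    (hstep : A.Step w (q, i) (r, j))
    (h : ∃ u v, leftTape w = u ++ v ∧ j = u.length ∧ A.AcceptsFrom (A.crossing u) r v) :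
    ∃ u v, leftTape w = u ++ v ∧ i = u.length ∧ A.AcceptsFrom (A.crossing u) q v := by
  obtain ⟨x, hx, r', d, hd, hc⟩ := hstep
  obtain ⟨u', v', hw', hj, hacc⟩ := h
  obtain ⟨rfl, hij⟩ := Prod.mk.inj hc
  have hx' : x ≠ .rend := by rintro rfl; simp [hrend] at hd
  obtain ⟨u, v, hw, hi⟩ := exists_leftTape_eq_of_tapeSym hx hx'
  refine ⟨u, x :: v, hw, hi, ?_⟩
  cases d with
  | true =>
    obtain ⟨rfl, rfl⟩ : u' = u ++ [x] ∧ v' = v := by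
      apply List.append_inj
      · simp [← hw, ← hw']
      · simp at hij ⊢; omega
    rw [crossing_concat] at hacc
    exact ⟨r, .right hd, hacc⟩
  | false =>
    rcases u.eq_nil_or_concat' with rfl | ⟨u, y, rfl⟩
    · simp at hij hi; omega
    obtain ⟨rfl, rfl⟩ : u' = u ∧ v' = y :: x :: v := by
      apply List.append_inj
      · simp [← hw', hw]
      · simp at hij hi; omega
    obtain ⟨p, hp, s, hs, hv⟩ := hacc
    rw [← crossing_concat] at hp hs hv
    exact ⟨s, .left hd hp hs, hv⟩

theorem accepts_iff_acceptsFrom (hrend : ∀ q, A.δ q .rend = none) :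
    A.Accepts w ↔ A.AcceptsFrom (fun _ _ => False) A.init (leftTape w) := by
  constructor
  · rintro ⟨t, ht, hrun⟩
    have hgen : ∀ c, Relation.ReflTransGen (A.Step w) c (t, (w.length : ℤ) + 1) →
        ∃ u v, leftTape w = u ++ v ∧ c.2 = u.length ∧ A.AcceptsFrom (A.crossing u) c.1 v := by
      intro c hc
      induction hc using Relation.ReflTransGen.head_induction_on with
      | refl => exact ⟨leftTape w, [], by simp, by simp [length_leftTape], ht⟩
      | head hstep _ ih => exact acceptsFrom_of_step hrend hstep ih
    obtain ⟨u, v, hw, hu, hacc⟩ := hgen _ hrun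
    obtain rfl : u = [] := by simpa using hu.symm
    rwa [hw]
  · exact fun h => exists_reflTransGen_of_acceptsFrom (u := []) rfl h

end Crossing

section Restrict

variable {α σ : Type} {A : TwoDFA α σ} {S : Set σ} {w : List α}

/-- The automaton `A` with its states cut down to a set `S` closed under the transitions. -/
def restrict (A : TwoDFA α σ) (S : Set σ) (hinit : A.init ∈ S)
    (hδ : ∀ q ∈ S, ∀ x c, A.δ q x = some c → c.1 ∈ S) : TwoDFA α S where
  init := ⟨A.init, hinit⟩
  δ q x := (A.δ q x).pmap (fun c hc => (⟨c.1, hc⟩, c.2)) (hδ q q.2 x)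
  F := Subtype.val ⁻¹' A.F

theorem restrict_δ_eq_some_iff {hinit : A.init ∈ S}
    {hδ : ∀ q ∈ S, ∀ x c, A.δ q x = some c → c.1 ∈ S} {q r : S} {x : TapeSymbol α} {d : Bool} :
    (A.restrict S hinit hδ).δ q x = some (r, d) ↔ A.δ q x = some (r.1, d) := by
  simp only [restrict, Option.pmap_eq_some_iff]
  constructor
  · rintro ⟨⟨r', d'⟩, hc, h, heq⟩
    cases heq
    exact h
  · exact fun h => ⟨_, r.2, h, rfl⟩

theorem accepts_restrict_iff (hinit : A.init ∈ S)
    (hδ : ∀ q ∈ S, ∀ x c, A.δ q x = some c → c.1 ∈ S) :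
    (A.restrict S hinit hδ).Accepts w ↔ A.Accepts w := by
  constructor
  · rintro ⟨q, hq, hrun⟩
    refine ⟨q, hq, hrun.lift (fun c => (c.1.1, c.2)) ?_⟩
    rintro ⟨q, i⟩ _ ⟨x, hx, r, d, hd, rfl⟩
    exact ⟨x, hx, r, d, restrict_δ_eq_some_iff.1 hd, rfl⟩
  · rintro ⟨q, hq, hrun⟩
    have hlift : ∀ c, Relation.ReflTransGen (A.Step w) (A.init, 0) c →
        ∃ r : S, r.1 = c.1 ∧
          Relation.ReflTransGen ((A.restrict S hinit hδ).Step w) (⟨A.init, hinit⟩, 0) (r, c.2) := by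
      intro c hc
      induction hc with
      | refl => exact ⟨_, rfl, .refl⟩
      | tail _ hstep ih =>
        obtain ⟨q, hq, hrun⟩ := ih
        obtain ⟨x, hx, r, d, hd, rfl⟩ := hstep
        rw [← hq] at hd
        exact ⟨⟨r, hδ q q.2 x _ hd⟩, rfl,
          hrun.tail ⟨x, hx, _, d, restrict_δ_eq_some_iff.2 hd, rfl⟩⟩
    obtain ⟨r, rfl, hrun⟩ := hlift _ hrun
    exact ⟨r, hq, hrun⟩

end Restrict

section Countdown

/-- The largest number of letters that the counter needs to get from state `q` to state `0`. -/
def countdownMax : ℕ → ℕ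
  | 0 => 0
  | 1 => 2
  | q + 2 => countdownMax (q + 1) + 1 + countdownMax (q + 1)

theorem countdownMax_succ_add_one (s : ℕ) : countdownMax (s + 1) + 1 = 3 * 2 ^ s := by
  induction s with
  | zero => rfl
  | succ s ih => rw [countdownMax, pow_succ]; omega

theorem monotone_countdownMax : Monotone countdownMax :=
  monotone_nat_of_le_succ fun q => match q with
    | 0 => Nat.zero_le _
    | q + 1 => by rw [countdownMax]; omega

/-- If the prefix read so far has the crossing relation `f` and the head leaves it in state `q`,
then `n` further letters of the counter can bring the head to state `0`.

To get rid of `q + 1`, the prefix must first be made to turn `q` into `0`; the next letter then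
trades `q + 1` for `q` and erases what the prefix knows about the smaller states. In `ready` the
prefix already turns `q` into some `r < q`, which is counted down further; in `wait` this
information is missing or ignored. `primed` and `unprimed` are the same two cases for the states
`0` and `1`. -/
inductive Countdown (f : ℕ → ℕ → Prop) : ℕ → ℕ → Prop
  | zero : Countdown f 0 0
  | primed : f 0 0 → Countdown f 1 1
  | unprimed : Countdown f 1 2
  | ready {q r n : ℕ} :
      r < q → f q r → Countdown f r n → Countdown f (q + 1) (countdownMax q + 1 + n)
  | wait {q n : ℕ} :
      Countdown f (q + 1) n → Countdown f (q + 2) (countdownMax (q + 1) + 1 + n)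

variable {f : ℕ → ℕ → Prop} {k q r n : ℕ} {g : ℕ → Bool}

theorem countdown_countdownMax (f : ℕ → ℕ → Prop) : ∀ q, Countdown f q (countdownMax q)
  | 0 => .zero
  | 1 => .unprimed
  | q + 2 => .wait (countdown_countdownMax f (q + 1))

theorem Countdown.countdownMax_lt (h : Countdown f (q + 1) n) : countdownMax q < n := by
  rcases h with - | - | - | _ | _
  case primed | unprimed => simp [countdownMax]
  case ready | wait => omega

theorem Countdown.eq_zero (h : Countdown f q 0) : q = 0 := by
  generalize hn : 0 = n at h
  cases h with
  | zero => rfl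
  | _ => omega

theorem Countdown.succ_of_zero (h : f q 0) : Countdown f (q + 1) (countdownMax q + 1) := by
  rcases q.eq_zero_or_pos with rfl | hq
  · exact .primed h
  · exact .ready hq h .zero

theorem Countdown.succ_of_le (hq : 0 < q) (hr : r ≤ q) (h : f q r) (hn : Countdown f r n) :
    Countdown f (q + 1) (countdownMax q + 1 + n) := by
  rcases hr.eq_or_lt with rfl | hlt
  · obtain ⟨p, rfl⟩ := Nat.exists_eq_add_one.2 hq
    exact .wait hn
  · exact .ready hlt h hn

theorem Countdown.countdownMax_le (hf : ∀ p < q, ∀ r ≤ p, ¬ f p r) (h : Countdown f q n) :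
    countdownMax q ≤ n := by
  induction h with
  | zero => exact le_rfl
  | primed h => exact absurd h (hf 0 one_pos 0 le_rfl)
  | unprimed => exact le_rfl
  | ready hr h => exact absurd h (hf _ (Nat.lt_add_one _) _ hr.le)
  | wait _ ih =>
    have := ih fun p hp => hf p (by omega)
    rw [countdownMax]
    omega

/-- The moves of the counter on its letter `(k, g)`: the letter trades `k` for `k - 1` if the
prefix before it turns `k - 1` into `0`, and each state `q > k` either leaves immediately or is
handed over to that prefix, as prescribed by `g q`. For `k = 0` the letter just turns `0`
into `0`. -/
def counterMove (k : ℕ) (g : ℕ → Bool) (q : ℕ) : Option (ℕ × Bool) :=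
  if k < q then some (q, g q)
  else if q = 0 then some (k - 1, true)
  else if q = k then some (k - 1, false)
  else none

theorem counterMove_of_lt (h : k < q) : counterMove k g q = some (q, g q) :=
  if_pos h

theorem counterMove_zero : counterMove k g 0 = some (k - 1, true) := by
  simp [counterMove]

theorem counterMove_self (hk : 0 < k) : counterMove k g k = some (k - 1, false) := by
  simp [counterMove, hk.ne']

theorem counterMove_eq_none (hq : 0 < q) (hqk : q < k) : counterMove k g q = none := by
  simp [counterMove, hq.ne', hqk.ne, hqk.not_gt]

theorem le_max_of_counterMove {c : ℕ × Bool} (h : counterMove k g q = some c) :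
    c.1 ≤ max q k := by
  unfold counterMove at h
  split_ifs at h <;> cases h <;> simp

theorem settled_exitsRight_counterMove : Settled (ExitsRight (counterMove k g) f) := by
  refine settled_exitsRight fun q r h => ?_
  by_cases hq : k < q
  · rw [counterMove_of_lt hq] at h
    grind [counterMove_of_lt]
  · obtain rfl : r = k - 1 := by grind [counterMove]
    grind [counterMove]

theorem eq_of_exitsRight_counterMove_of_lt (hq : k < q) (hf : ∀ r, f q r → r = q)
    (h : ExitsRight (counterMove k g) f q r) : r = q := by
  induction h with
  | right h => simp_all [counterMove_of_lt hq]
  | @left q p p' r h hp _ ih =>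
    obtain rfl : q = p := by simp_all [counterMove_of_lt hq]
    obtain rfl := hf _ hp
    exact ih hq hf

theorem eq_pred_of_exitsRight_counterMove_zero (h : ExitsRight (counterMove k g) f 0 r) :
    r = k - 1 := by
  rcases h with h | ⟨h, -, -⟩ <;> simp_all [counterMove_zero]

theorem not_exitsRight_counterMove_of_lt (hq : 0 < q) (hqk : q < k) :
    ¬ ExitsRight (counterMove k g) f q r := by
  rintro (h | ⟨h, -, -⟩) <;> simp [counterMove_eq_none hq hqk] at h

theorem eq_pred_of_exitsRight_counterMove_self (hk : 0 < k) (hf : Settled f) (hr : r ≤ k)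
    (h : ExitsRight (counterMove k g) f k r) : f (k - 1) 0 ∧ r = k - 1 := by
  suffices hgen : ∀ q, ExitsRight (counterMove k g) f q r → k = q → f (k - 1) 0 ∧ r = k - 1 from
    hgen k h rfl
  clear h
  intro q h hq
  induction h with
  | right h => simp [← hq, counterMove_self hk] at h
  | @left q p p' r h hp hp' ih =>
    subst hq
    rw [counterMove_self hk] at h
    cases h
    rcases p'.eq_zero_or_pos with rfl | hpos
    · exact ⟨hp, eq_pred_of_exitsRight_counterMove_zero hp'⟩
    rcases lt_trichotomy p' k with hlt | heq | hgt
    · exact absurd hp' (not_exitsRight_counterMove_of_lt hpos hlt)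
    · exact ih hr heq.symm
    · have := eq_of_exitsRight_counterMove_of_lt hgt (fun _ => hf hp) hp'
      omega

theorem exists_lt_of_exitsRight_counterMove (hf : Settled f) (hkq : k < q) (hrq : r < q)
    (h : ExitsRight (counterMove k g) f q r) :
    ∃ z < q, f q z ∧ ExitsRight (counterMove k g) f z r := by
  cases h with
  | right h =>
    simp only [counterMove_of_lt hkq, Option.some.injEq, Prod.mk.injEq] at h
    omega
  | @left _ p z _ h hz hzr =>
    obtain rfl : q = p := by simp_all [counterMove_of_lt hkq]
    refine ⟨z, lt_of_not_ge fun hqz => ?_, hz, hzr⟩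
    have := eq_of_exitsRight_counterMove_of_lt (hkq.trans_le hqz) (fun _ => hf hz) hzr
    omega

theorem lt_of_exitsRight_counterMove (hk : 2 ≤ k) (hqk : q < k)
    (h : ExitsRight (counterMove k g) f q r) : q < r := by
  rcases q.eq_zero_or_pos with rfl | hq
  · rw [eq_pred_of_exitsRight_counterMove_zero h]
    omega
  · exact absurd h (not_exitsRight_counterMove_of_lt hq hqk)

theorem Countdown.countdownMax_pred_le
    (h : Countdown (ExitsRight (counterMove k g) f) (k - 1) n) : countdownMax (k - 1) ≤ n :=
  h.countdownMax_le fun _ hp _ hr hpr =>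
    (lt_of_exitsRight_counterMove (by omega) (by omega) hpr).not_ge hr

theorem Countdown.countdownMax_le_succ
    (h : Countdown (ExitsRight (counterMove k g) f) k n) : countdownMax k ≤ n + 1 := by
  rcases lt_or_ge k 2 with hk | hk
  · interval_cases k
    · exact Nat.zero_le _
    · exact Nat.succ_le_succ h.countdownMax_lt
  · exact (h.countdownMax_le fun _ hp _ hr hpr =>
      (lt_of_exitsRight_counterMove hk hp hpr).not_ge hr).trans n.le_succ

theorem Countdown.exists_le_succ_of_self (hk : 0 < k) (hf : Settled f) (hr : r ≤ k)
    (hqr : ExitsRight (counterMove k g) f k r)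
    (h : Countdown (ExitsRight (counterMove k g) f) r n) : ∃ m ≤ n + 1, Countdown f k m := by
  obtain ⟨hzero, rfl⟩ := eq_pred_of_exitsRight_counterMove_self hk hf hr hqr
  have hm := Countdown.succ_of_zero hzero
  rw [Nat.sub_add_cancel hk] at hm
  exact ⟨_, Nat.succ_le_succ h.countdownMax_pred_le, hm⟩

-- `hlt` is discharged by `Countdown.exists_le_succ_of_lt`, whose induction needs this lemma.
theorem Countdown.exists_le_succ_of_exitsRight (hf : Settled f) (hq : ∀ r, f q r → r = q)
    (hqr : ExitsRight (counterMove k g) f q r)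
    (h : Countdown (ExitsRight (counterMove k g) f) r n)
    (hlt : k < q → r = q → ∃ m ≤ n + 1, Countdown f q m) : ∃ m ≤ n + 1, Countdown f q m := by
  rcases lt_or_ge q r with hup | hdown
  · obtain ⟨r, rfl⟩ := Nat.exists_eq_add_one_of_ne_zero hup.ne_bot
    have hmax : countdownMax q ≤ countdownMax r := monotone_countdownMax (by omega)
    have := h.countdownMax_lt
    exact ⟨_, by omega, countdown_countdownMax f q⟩
  rcases q.eq_zero_or_pos with rfl | hpos
  · exact ⟨0, Nat.zero_le _, .zero⟩
  rcases lt_trichotomy q k with hqk | rfl | hqk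
  · exact absurd hqr (not_exitsRight_counterMove_of_lt hpos hqk)
  · exact exists_le_succ_of_self hpos hf hdown hqr h
  · exact hlt hqk (eq_of_exitsRight_counterMove_of_lt hqk hq hqr)

theorem Countdown.exists_le_succ_of_lt (hf : Settled f) (hkq : k < q)
    (h : Countdown (ExitsRight (counterMove k g) f) q n) : ∃ m ≤ n + 1, Countdown f q m := by
  induction h with
  | zero => omega
  | primed | unprimed => exact ⟨2, by omega, .unprimed⟩
  | @ready q r n hr hqr hn ih =>
    rcases (Nat.le_of_lt_succ hkq).eq_or_lt with rfl | hkq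
    · obtain ⟨m, hm, hcount⟩ := exists_le_succ_of_self (by omega) hf hr.le hqr hn
      obtain ⟨p, rfl⟩ := Nat.exists_eq_add_one_of_ne_zero hr.ne_bot
      exact ⟨_, by omega, .wait hcount⟩
    · obtain ⟨z, hzq, hz, hzr⟩ := exists_lt_of_exitsRight_counterMove hf hkq hr hqr
      obtain ⟨m, hm, hcount⟩ := exists_le_succ_of_exitsRight hf (fun _ => hf hz) hzr hn
        fun hkz hrz => hrz ▸ ih (hrz ▸ hkz)
      exact ⟨_, by omega, .ready hzq hz hcount⟩
  | @wait q n hn ih =>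
    rcases (Nat.le_of_lt_succ hkq).eq_or_lt with rfl | hkq
    · have hmax := hn.countdownMax_le_succ
      exact ⟨_, by omega, .wait (countdown_countdownMax f (q + 1))⟩
    · obtain ⟨m, hm, hcount⟩ := ih hkq
      exact ⟨_, by omega, .wait hcount⟩

/-- Some letter takes the head from state `q` to a state from which `n` more letters suffice to
reach `0`. Only the values of `g` up to `q` are prescribed, so that the remaining ones can be
adapted to larger states. -/
def Advances (f : ℕ → ℕ → Prop) (q n : ℕ) : Prop :=
  ∃ k ≤ q, ∃ g : ℕ → Bool, ∀ g' : ℕ → Bool, (∀ p ≤ q, g' p = g p) →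
    ∃ r ≤ q, ExitsRight (counterMove k g') f q r ∧
      Countdown (ExitsRight (counterMove k g') f) r n

theorem Advances.succ_of_zero (h : f q 0) : Advances f (q + 1) (countdownMax q) :=
  ⟨q + 1, le_rfl, fun _ => true, fun _ _ => ⟨q, q.le_succ,
    .left (counterMove_self q.succ_pos) h (.right counterMove_zero), countdown_countdownMax _ q⟩⟩

theorem Advances.unprimed : Advances f 1 1 := by
  refine ⟨0, zero_le_one, fun _ => true, fun g' hg' => ⟨1, le_rfl, .right ?_, .primed ?_⟩⟩
  · rw [counterMove_of_lt one_pos, hg' 1 le_rfl]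
  · exact .right counterMove_zero

theorem Advances.ready (hr : r < q) (hqr : f q r) (h : Advances f r n) :
    Advances f (q + 1) (countdownMax q + 1 + n) := by
  obtain ⟨k, hk, g, H⟩ := h
  refine ⟨k, by omega, Function.update (Function.update g q false) (q + 1) true,
    fun g' hg' => ?_⟩
  obtain ⟨s, hs, hexit, hcount⟩ := H g' fun p hp => by
    rw [hg' p (by omega), Function.update_of_ne (by omega), Function.update_of_ne (by omega)]
  have hmove : counterMove k g' q = some (q, false) := by
    simp [counterMove_of_lt (hk.trans_lt hr), hg']
  have hmove_succ : counterMove k g' (q + 1) = some (q + 1, true) := by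
    simp [counterMove_of_lt (show k < q + 1 by omega), hg']
  exact ⟨q + 1, le_rfl, .right hmove_succ, .ready (by omega) (.left hmove hqr hexit) hcount⟩

theorem Advances.wait (h : Advances f (q + 1) n) :
    Advances f (q + 2) (countdownMax (q + 1) + 1 + n) := by
  obtain ⟨k, hk, g, H⟩ := h
  refine ⟨k, by omega, Function.update g (q + 2) true, fun g' hg' => ?_⟩
  obtain ⟨r, hr, hexit, hcount⟩ := H g' fun p hp => by
    rw [hg' p (by omega), Function.update_of_ne (by omega)]
  have hmove : counterMove k g' (q + 2) = some (q + 2, true) := by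
    simp [counterMove_of_lt (show k < q + 2 by omega), hg']
  exact ⟨q + 2, le_rfl, .right hmove, .succ_of_le q.succ_pos hr hexit hcount⟩

theorem Countdown.advances (h : Countdown f q (n + 1)) : Advances f q n := by
  generalize hm : n + 1 = m at h
  induction h generalizing n with
  | zero => omega
  | primed h =>
    obtain rfl : n = 0 := by omega
    exact .succ_of_zero h
  | unprimed =>
    obtain rfl : n = 1 := by omega
    exact .unprimed
  | @ready q r j hr hqr hj ih =>
    rcases j with - | j
    · obtain rfl := hj.eq_zero
      obtain rfl : n = countdownMax q := by omega
      exact .succ_of_zero hqr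
    · obtain rfl : n = countdownMax q + 1 + j := by omega
      exact .ready hr hqr (ih rfl)
  | @wait q j hj ih =>
    rcases j with - | j
    · exact absurd hj.eq_zero q.succ_ne_zero
    obtain rfl : n = countdownMax (q + 1) + 1 + j := by omega
    exact .wait (ih rfl)

end Countdown

section Counter

/-- The letters of the counter with states `0, …, s`, as parameters of `counterMove`. -/
abbrev CounterLetter (s : ℕ) : Type :=
  Fin (s + 1) × (Fin (s + 1) → Bool)

/-- The counter on the states `0, …, s`. Its state type is `ℕ`, to make room for arithmetic on
states; the remaining states are never entered. -/
def counter (s : ℕ) : TwoDFA (CounterLetter s) ℕ where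
  init := s
  δ q
    | .lend => if q = s then some (s, true) else none
    | .rend => none
    | .letter a => counterMove a.1 (fun p => a.2 (Fin.ofNat (s + 1) p)) q
  F := {0}

variable {s n q : ℕ} {f : ℕ → ℕ → Prop}

theorem counter_δ_mem_Iic (hq : q ∈ Set.Iic s) (x : TapeSymbol (CounterLetter s)) (c : ℕ × Bool)
    (h : (counter s).δ q x = some c) : c.1 ∈ Set.Iic s := by
  rcases x with - | - | a
  · simp only [counter, Option.ite_none_right_eq_some, Option.some.injEq] at h
    simp [← h.2]
  · simp [counter] at h
  · simp only [counter] at h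
    have hc := le_max_of_counterMove h
    have ha := a.1.is_le
    simp only [Set.mem_Iic] at hq ⊢
    omega

theorem Countdown.exists_counterLetter (hq : q ≤ s) (h : Countdown f q (n + 1)) :
    ∃ a : CounterLetter s, ∃ r ≤ s, ExitsRight ((counter s).δ · (.letter a)) f q r ∧
      Countdown (ExitsRight ((counter s).δ · (.letter a)) f) r n := by
  obtain ⟨k, hk, g, H⟩ := h.advances
  obtain ⟨r, hr, hexit, hcount⟩ := H (fun p => g (Fin.ofNat (s + 1) p)) fun p hp => by
    simp [Nat.mod_eq_of_lt (show p < s + 1 by omega)]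
  exact ⟨(⟨k, by omega⟩, fun p => g p), r, hr.trans hq, hexit, hcount⟩

theorem Countdown.exists_acceptsFrom (hq : q ≤ s) (h : Countdown f q n) :
    ∃ w : List (CounterLetter s),
      w.length = n ∧ (counter s).AcceptsFrom f q (w.map .letter) := by
  induction n generalizing f q with
  | zero => exact ⟨[], rfl, h.eq_zero⟩
  | succ n ih =>
    obtain ⟨a, r, hr, hexit, hcount⟩ := h.exists_counterLetter hq
    obtain ⟨w, rfl, hw⟩ := ih hr hcount
    exact ⟨a :: w, rfl, r, hexit, hw⟩

theorem AcceptsFrom.exists_countdown {w : List (CounterLetter s)} (hf : Settled f)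
    (hq : ∀ r, f q r → r = q) (h : (counter s).AcceptsFrom f q (w.map .letter)) :
    ∃ m ≤ w.length, Countdown f q m := by
  induction w generalizing f q with
  | nil =>
    obtain rfl : q = 0 := h
    exact ⟨0, le_rfl, .zero⟩
  | cons a w ih =>
    obtain ⟨r, hqr, hw⟩ := h
    have hsettled : Settled (ExitsRight ((counter s).δ · (.letter a)) f) :=
      settled_exitsRight_counterMove
    obtain ⟨m, hm, hcount⟩ := ih hsettled (fun _ => hsettled hqr) hw
    obtain ⟨m', hm', hcount'⟩ := Countdown.exists_le_succ_of_exitsRight hf hq hqr hcount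
      fun hlt hrq => Countdown.exists_le_succ_of_lt hf hlt (hrq ▸ hcount)
    exact ⟨m', hm'.trans (Nat.succ_le_succ hm), hcount'⟩

theorem exitsRight_lend_iff {r : ℕ} :
    ExitsRight ((counter s).δ · .lend) (fun _ _ => False) q r ↔ q = s ∧ r = s := by
  constructor
  · rintro (h | ⟨-, h, -⟩)
    · simp_all [counter, eq_comm]
    · exact h.elim
  · rintro ⟨rfl, rfl⟩
    exact .right (by simp [counter])

theorem counter_accepts_iff {w : List (CounterLetter s)} :
    (counter s).Accepts w ↔
      (counter s).AcceptsFrom (fun q r => q = s ∧ r = s) s (w.map .letter) := by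
  have hlend : ExitsRight ((counter s).δ · .lend) (fun _ _ => False) =
      fun q r => q = s ∧ r = s := by
    ext q r
    exact exitsRight_lend_iff
  rw [accepts_iff_acceptsFrom fun _ => rfl, leftTape, AcceptsFrom, hlend]
  simp [counter]

theorem exists_counter_accepts (s : ℕ) :
    ∃ w, (counter s).Accepts w ∧ w.length = countdownMax s := by
  obtain ⟨w, hlen, hw⟩ := (countdown_countdownMax _ s).exists_acceptsFrom le_rfl
  exact ⟨w, counter_accepts_iff.2 hw, hlen⟩

theorem countdownMax_le_length_of_accepts {w : List (CounterLetter s)}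
    (h : (counter s).Accepts w) : countdownMax s ≤ w.length := by
  obtain ⟨m, hm, hcount⟩ := (counter_accepts_iff.1 h).exists_countdown
    (fun _ _ _ hxz hzy => hzy.2.trans hxz.2.symm) (fun _ hr => hr.2)
  exact (hcount.countdownMax_le fun p hp _ _ h => hp.ne h.1).trans hm

end Counter

end TwoDFA

/-- For every `n ≥ 2` there exists a 2DFA with `n` states, accepting at least one string,
such that the length of the shortest string it accepts is exactly `3 · 2^(n−2) − 1`. -/
theorem exists_2dfa_shortest_eq_three_pow (n : ℕ) (hn : 2 ≤ n) :
    ∃ (α σ : Type) (_ : Fintype α) (_ : Fintype σ) (A : TwoDFA α σ),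
      Fintype.card σ = n ∧
      (∃ w, A.Accepts w ∧ w.length = 3 * 2 ^ (n - 2) - 1) ∧
      (∀ w, A.Accepts w → 3 * 2 ^ (n - 2) - 1 ≤ w.length) := by
  obtain ⟨m, rfl⟩ := Nat.exists_eq_add_of_le' hn
  let A := (TwoDFA.counter (m + 1)).restrict (Set.Iic (m + 1)) Set.self_mem_Iic
    fun _ => TwoDFA.counter_δ_mem_Iic
  have hA (w) : A.Accepts w ↔ (TwoDFA.counter (m + 1)).Accepts w :=
    TwoDFA.accepts_restrict_iff _ _
  have hmax : TwoDFA.countdownMax (m + 1) = 3 * 2 ^ (m + 2 - 2) - 1 :=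
    Nat.eq_sub_of_add_eq (TwoDFA.countdownMax_succ_add_one m)
  simp only [← hmax]
  refine ⟨_, _, inferInstance, inferInstance, A, by simp, ?_, fun w hw => ?_⟩
  · obtain ⟨w, hw, hlen⟩ := TwoDFA.exists_counter_accepts (m + 1)
    exact ⟨w, (hA w).2 hw, hlen⟩
  · exact TwoDFA.countdownMax_le_length_of_accepts ((hA w).1 hw)
end
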